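/- arXiv:2309.08271 — 6 statements merged into one kernel-verified Lean document; each statement's English description precedes it below -/
import Mathlib

section
/- Let L be a real symmetric positive semidefinite n×n matrix and let M be the Moore–Penrose pseudoinverse of L, i.e. L·M·L = L, M·L·M = M, (L·M)ᵀ = L·M and (M·L)ᵀ = M·L. Let v ∈ ℝⁿ satisfy L·M·v = v. Then 1 + vᵀ·M·v > 0, and the matrix M − (1/(1 + vᵀ·M·v))·(M·v)·(M·v)ᵀ is the Moore–Penrose pseudoinverse of L + v·vᵀ. -/
open Matrix

/-- `M` is the Moore–Penrose pseudoinverse of `L`. -/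
def IsMoorePenroseInv {n : ℕ} (L M : Matrix (Fin n) (Fin n) ℝ) : Prop :=
  L * M * L = L ∧ M * L * M = M ∧ (L * M)ᵀ = L * M ∧ (M * L)ᵀ = M * L

/-!
If `u` lies in the column space and `v` in the row space of `A`, i.e. `A B u = u` and `v B A = v`,
then multiplying the Sherman–Morrison candidate `B'` by `A' = A + u v` on either side leaves the
projections unchanged: `A' B' = A B` and `B' A' = B A`. These are Hermitian, and they fix `A'` and
`B'`, so `B'` is the pseudoinverse of `A'`. If `A` is Hermitian, so is `B`, by uniqueness of the
pseudoinverse; for `A` positive semidefinite, `v⋆ B v = (B v)⋆ A (B v) ≥ 0`.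
-/

/-- `B` is the Moore–Penrose pseudoinverse of the rectangular matrix `A`, over any coefficients with
a star operation; over `ℝ`, where `star` is trivial, Hermitian means symmetric. -/
structure IsPseudoinverse {m n R : Type*} [Fintype m] [Fintype n] [NonUnitalNonAssocSemiring R]
    [Star R] (A : Matrix m n R) (B : Matrix n m R) : Prop where
  mul_mul_left : A * B * A = A
  mul_mul_right : B * A * B = B
  isHermitian_mul_left : (A * B).IsHermitian
  isHermitian_mul_right : (B * A).IsHermitian

theorem isMoorePenroseInv_iff_isPseudoinverse {n : ℕ} {L M : Matrix (Fin n) (Fin n) ℝ} :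
    IsMoorePenroseInv L M ↔ IsPseudoinverse L M := by
  simp only [IsMoorePenroseInv, ← conjTranspose_eq_transpose_of_trivial]
  exact ⟨fun ⟨hLML, hMLM, hLM, hML⟩ ↦ ⟨hLML, hMLM, hLM, hML⟩,
    fun ⟨hLML, hMLM, hLM, hML⟩ ↦ ⟨hLML, hMLM, hLM, hML⟩⟩

namespace IsPseudoinverse

variable {m n R : Type*} [Fintype m] [Fintype n] [NonUnitalSemiring R] [StarRing R]
  {A : Matrix m n R} {B C : Matrix n m R}

theorem conjTranspose (h : IsPseudoinverse A B) : IsPseudoinverse Aᴴ Bᴴ where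
  mul_mul_left := by
    rw [Matrix.mul_assoc, ← conjTranspose_mul, ← conjTranspose_mul, h.mul_mul_left]
  mul_mul_right := by
    rw [Matrix.mul_assoc, ← conjTranspose_mul, ← conjTranspose_mul, h.mul_mul_right]
  isHermitian_mul_left := by
    rw [← conjTranspose_mul]
    exact h.isHermitian_mul_right.conjTranspose
  isHermitian_mul_right := by
    rw [← conjTranspose_mul]
    exact h.isHermitian_mul_left.conjTranspose

theorem mul_left_unique (hB : IsPseudoinverse A B) (hC : IsPseudoinverse A C) : A * B = A * C :=
  calc
    A * B = (A * B)ᴴ := hB.isHermitian_mul_left.eq.symm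
    _ = ((A * C) * (A * B))ᴴ := by rw [← Matrix.mul_assoc, hC.mul_mul_left]
    _ = (A * B) * (A * C) := by
      rw [conjTranspose_mul, hB.isHermitian_mul_left.eq, hC.isHermitian_mul_left.eq]
    _ = A * C := by rw [← Matrix.mul_assoc, hB.mul_mul_left]

theorem mul_right_unique (hB : IsPseudoinverse A B) (hC : IsPseudoinverse A C) : B * A = C * A :=
  conjTranspose_injective <| by
    simpa only [conjTranspose_mul] using hB.conjTranspose.mul_left_unique hC.conjTranspose

theorem unique (hB : IsPseudoinverse A B) (hC : IsPseudoinverse A C) : B = C :=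
  calc
    B = B * A * B := hB.mul_mul_right.symm
    _ = C * (A * B) := by rw [hB.mul_right_unique hC, Matrix.mul_assoc]
    _ = C * A * C := by rw [hB.mul_left_unique hC, Matrix.mul_assoc]
    _ = C := hC.mul_mul_right

theorem isHermitian {A B : Matrix n n R} (h : IsPseudoinverse A B) (hA : A.IsHermitian) :
    B.IsHermitian :=
  unique (hA.eq ▸ h.conjTranspose) h

end IsPseudoinverse

section RankOneUpdate

variable {m n K : Type*} [Fintype m] [Fintype n] [Field K]
  {A : Matrix m n K} {B : Matrix n m K} {u : m → K} {v : n → K}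

theorem add_vecMulVec_mul_sub_smul_vecMulVec (hu : A *ᵥ B *ᵥ u = u)
    (hd : 1 + v ⬝ᵥ B *ᵥ u ≠ 0) :
    (A + vecMulVec u v) * (B - (1 / (1 + v ⬝ᵥ B *ᵥ u)) • vecMulVec (B *ᵥ u) (v ᵥ* B)) =
      A * B := by
  rw [Matrix.add_mul, Matrix.mul_sub, Matrix.mul_sub, Matrix.mul_smul, Matrix.mul_smul,
    mul_vecMulVec, hu, vecMulVec_mul, vecMulVec_mul_vecMulVec, vecMulVec_smul]
  match_scalars
  · rfl
  · field_simp
    ring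

theorem sub_smul_vecMulVec_mul_add_vecMulVec (hv : v ᵥ* B ᵥ* A = v)
    (hd : 1 + v ⬝ᵥ B *ᵥ u ≠ 0) :
    (B - (1 / (1 + v ⬝ᵥ B *ᵥ u)) • vecMulVec (B *ᵥ u) (v ᵥ* B)) * (A + vecMulVec u v) =
      B * A := by
  rw [Matrix.mul_add, Matrix.sub_mul, Matrix.sub_mul, Matrix.smul_mul, Matrix.smul_mul,
    vecMulVec_mul, hv, mul_vecMulVec, vecMulVec_mul_vecMulVec, ← dotProduct_mulVec, vecMulVec_smul]
  match_scalars
  · rfl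
  · field_simp
    ring

theorem IsPseudoinverse.add_vecMulVec [Star K] (h : IsPseudoinverse A B)
    (hu : A *ᵥ B *ᵥ u = u) (hv : v ᵥ* B ᵥ* A = v) (hd : 1 + v ⬝ᵥ B *ᵥ u ≠ 0) :
    IsPseudoinverse (A + vecMulVec u v)
      (B - (1 / (1 + v ⬝ᵥ B *ᵥ u)) • vecMulVec (B *ᵥ u) (v ᵥ* B)) where
  mul_mul_left := by
    rw [add_vecMulVec_mul_sub_smul_vecMulVec hu hd, Matrix.mul_add, h.mul_mul_left, mul_vecMulVec,
      ← mulVec_mulVec, hu]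
  mul_mul_right := by
    rw [sub_smul_vecMulVec_mul_add_vecMulVec hv hd, Matrix.mul_sub, h.mul_mul_right,
      Matrix.mul_smul, mul_vecMulVec, ← mulVec_mulVec, hu]
  isHermitian_mul_left := by
    rw [add_vecMulVec_mul_sub_smul_vecMulVec hu hd]
    exact h.isHermitian_mul_left
  isHermitian_mul_right := by
    rw [sub_smul_vecMulVec_mul_add_vecMulVec hv hd]
    exact h.isHermitian_mul_right

end RankOneUpdate

theorem dotProduct_mulVec_nonneg_of_mulVec_mulVec_eq {n R : Type*} [Fintype n] [Ring R]
    [PartialOrder R] [StarRing R] {A B : Matrix n n R} {v : n → R} (hA : A.PosSemidef)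
    (hB : B.IsHermitian) (hv : A *ᵥ B *ᵥ v = v) : 0 ≤ star v ⬝ᵥ B *ᵥ v :=
  calc
    0 ≤ star (B *ᵥ v) ⬝ᵥ A *ᵥ B *ᵥ v := hA.dotProduct_mulVec_nonneg _
    _ = star v ⬝ᵥ B *ᵥ v := by rw [hv, star_mulVec, hB.eq, dotProduct_mulVec]

theorem sherman_morrison_pseudoinverse_update_general {n K : Type*} [Fintype n] [Field K]
    [PartialOrder K] [StarRing K] [StarOrderedRing K] {A B : Matrix n n K} (hA : A.PosSemidef)
    (h : IsPseudoinverse A B) {v : n → K} (hv : A *ᵥ B *ᵥ v = v) :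
    0 < 1 + star v ⬝ᵥ B *ᵥ v ∧
      IsPseudoinverse (A + vecMulVec v (star v))
        (B - (1 / (1 + star v ⬝ᵥ B *ᵥ v)) • vecMulVec (B *ᵥ v) (star (B *ᵥ v))) := by
  have hB : B.IsHermitian := h.isHermitian hA.isHermitian
  have star_mulVec_B : star (B *ᵥ v) = star v ᵥ* B := by rw [star_mulVec, hB.eq]
  have hv_row : star v ᵥ* B ᵥ* A = star v := by
    rw [← star_mulVec_B, ← hA.isHermitian.eq, ← star_mulVec, hv]
  have hpos : 0 < 1 + star v ⬝ᵥ B *ᵥ v :=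
    add_pos_of_pos_of_nonneg one_pos (dotProduct_mulVec_nonneg_of_mulVec_mulVec_eq hA hB hv)
  rw [star_mulVec_B]
  exact ⟨hpos, h.add_vecMulVec hv hv_row hpos.ne'⟩

theorem sherman_morrison_pseudoinverse_update {n : ℕ}
    (L M : Matrix (Fin n) (Fin n) ℝ) (hL : L.PosSemidef)
    (hM : IsMoorePenroseInv L M)
    (v : Fin n → ℝ) (hv : L.mulVec (M.mulVec v) = v) :
    0 < 1 + v ⬝ᵥ M.mulVec v ∧
      IsMoorePenroseInv (L + vecMulVec v v)
        (M - (1 / (1 + v ⬝ᵥ M.mulVec v)) •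
          vecMulVec (M.mulVec v) (M.mulVec v)) := by
  rw [isMoorePenroseInv_iff_isPseudoinverse] at hM ⊢
  simpa only [star_trivial] using sherman_morrison_pseudoinverse_update_general hL hM hv
end

section
/- Let L be a real symmetric positive semidefinite n×n matrix with Moore–Penrose pseudoinverse M, and let v ∈ ℝⁿ satisfy L·M·v = v. Let M' be the Moore–Penrose pseudoinverse of L + v·vᵀ. Then vᵀ·M'·v = (vᵀ·M·v) / (1 + vᵀ·M·v). -/
open Matrix

/-!
The form of a generalized inverse does not depend on the choice of inverse: if `A * G * A = A`,
`A *ᵥ x = u` and `y ᵥ* A = v`, then `v ⬝ᵥ G *ᵥ u = y ⬝ᵥ A *ᵥ x = y ⬝ᵥ u`. If `L *ᵥ x = u` and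
`y ᵥ* L = v`, then `y ⬝ᵥ u = v ⬝ᵥ x =: r`, and the update `L + vecMulVec u v` sends `x` to
`(1 + r) • u` and `y` to `(1 + r) • v`. So `x` and `y`, divided by `1 + r`, are preimages of `u`
and `v` under the updated matrix, and the value sought is `y ⬝ᵥ u / (1 + r) = r / (1 + r)`. For
positive semidefinite `L` and `u = v`, one can take `y = x`, and `r = x ⬝ᵥ L *ᵥ x ≥ 0`.
-/

section GeneralizedInverse

variable {m n R : Type*} [Fintype m] [Fintype n] [NonUnitalSemiring R]

lemma dotProduct_mulVec_eq_of_mul_mul_eq_self {A : Matrix m n R} {G : Matrix n m R}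
    {x v : n → R} {y u : m → R} (hG : A * G * A = A) (hx : A *ᵥ x = u) (hy : y ᵥ* A = v) :
    v ⬝ᵥ G *ᵥ u = y ⬝ᵥ u := by
  calc v ⬝ᵥ G *ᵥ u = y ⬝ᵥ (A * G * A) *ᵥ x := by
        rw [← hx, ← hy, ← dotProduct_mulVec, mulVec_mulVec, mulVec_mulVec, Matrix.mul_assoc]
    _ = y ⬝ᵥ u := by rw [hG, hx]

lemma dotProduct_eq_of_mulVec_eq_of_vecMul_eq {L : Matrix m n R} {x v : n → R} {y u : m → R}
    (hx : L *ᵥ x = u) (hy : y ᵥ* L = v) : y ⬝ᵥ u = v ⬝ᵥ x := by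
  rw [← hx, ← hy, dotProduct_mulVec]

end GeneralizedInverse

section RankOneUpdate

variable {m n R : Type*} [CommSemiring R]

lemma add_vecMulVec_mulVec_of_mulVec_eq [Fintype n] {L : Matrix m n R} {x : n → R} {u : m → R}
    (hx : L *ᵥ x = u) (v : n → R) : (L + vecMulVec u v) *ᵥ x = (1 + v ⬝ᵥ x) • u := by
  rw [add_mulVec, hx, vecMulVec_mulVec, op_smul_eq_smul, add_smul, one_smul]

lemma vecMul_add_vecMulVec_of_vecMul_eq [Fintype m] {L : Matrix m n R} {y : m → R} {v : n → R}
    (hy : y ᵥ* L = v) (u : m → R) : y ᵥ* (L + vecMulVec u v) = (1 + y ⬝ᵥ u) • v := by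
  rw [vecMul_add, hy, vecMul_vecMulVec, add_smul, one_smul]

end RankOneUpdate

theorem effective_resistance_after_rank_one_update_general {m n K : Type*} [Fintype m] [Fintype n]
    [Field K] {L : Matrix m n K} {G : Matrix n m K} {x v : n → K} {y u : m → K}
    (hx : L *ᵥ x = u) (hy : y ᵥ* L = v) (hr : 1 + v ⬝ᵥ x ≠ 0)
    (hG : (L + vecMulVec u v) * G * (L + vecMulVec u v) = L + vecMulVec u v) :
    v ⬝ᵥ G *ᵥ u = (v ⬝ᵥ x) / (1 + v ⬝ᵥ x) := by
  have hyu : y ⬝ᵥ u = v ⬝ᵥ x := dotProduct_eq_of_mulVec_eq_of_vecMul_eq hx hy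
  have preimage_u : (L + vecMulVec u v) *ᵥ ((1 + v ⬝ᵥ x)⁻¹ • x) = u := by
    rw [mulVec_smul, add_vecMulVec_mulVec_of_mulVec_eq hx, inv_smul_smul₀ hr]
  have preimage_v : ((1 + v ⬝ᵥ x)⁻¹ • y) ᵥ* (L + vecMulVec u v) = v := by
    rw [smul_vecMul, vecMul_add_vecMulVec_of_vecMul_eq hy, hyu, inv_smul_smul₀ hr]
  calc v ⬝ᵥ G *ᵥ u = ((1 + v ⬝ᵥ x)⁻¹ • y) ⬝ᵥ u :=
        dotProduct_mulVec_eq_of_mul_mul_eq_self hG preimage_u preimage_v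
    _ = (v ⬝ᵥ x) / (1 + v ⬝ᵥ x) := by rw [smul_dotProduct, hyu, smul_eq_mul, inv_mul_eq_div]

lemma vecMul_eq_mulVec_of_isSymm {n R : Type*} [Fintype n] [NonUnitalCommSemiring R]
    {L : Matrix n n R} (hL : L.IsSymm) (x : n → R) : x ᵥ* L = L *ᵥ x := by
  rw [← mulVec_transpose, hL.eq]

lemma dotProduct_nonneg_of_posSemidef_of_mulVec_eq {n R : Type*} [Fintype n] [CommRing R]
    [PartialOrder R] [StarRing R] [TrivialStar R] {L : Matrix n n R} {x v : n → R}
    (hL : L.PosSemidef) (hx : L *ᵥ x = v) : 0 ≤ v ⬝ᵥ x := by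
  simpa only [hx, star_trivial, dotProduct_comm x v] using hL.dotProduct_mulVec_nonneg x

theorem effective_resistance_after_rank_one_update {n : ℕ}
    (L M M' : Matrix (Fin n) (Fin n) ℝ) (hL : L.PosSemidef)
    (hM : IsMoorePenroseInv L M)
    (v : Fin n → ℝ) (hv : L.mulVec (M.mulVec v) = v)
    (hM' : IsMoorePenroseInv (L + vecMulVec v v) M') :
    v ⬝ᵥ M'.mulVec v = (v ⬝ᵥ M.mulVec v) / (1 + v ⬝ᵥ M.mulVec v) := by
  have hr : 0 ≤ v ⬝ᵥ M *ᵥ v := dotProduct_nonneg_of_posSemidef_of_mulVec_eq hL hv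
  have hvL : (M *ᵥ v) ᵥ* L = v :=
    (vecMul_eq_mulVec_of_isSymm (isHermitian_iff_isSymm.mp hL.isHermitian) _).trans hv
  exact effective_resistance_after_rank_one_update_general hv hvL (by positivity) hM'.1
end

section
/- Let L be a real symmetric positive semidefinite n×n matrix whose kernel is exactly the span of the all-ones vector 𝟙 (i.e. L·x = 0 if and only if x is a scalar multiple of 𝟙). Let a ≠ b be indices, v = e_a − e_b, let M be the Moore–Penrose pseudoinverse of L, and let M' be the Moore–Penrose pseudoinverse of L + v·vᵀ. Then tr(M') < tr(M). -/
open Matrix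

/-!
If `v` is orthogonal to `ker L`, then `L M v = v` and the Sherman–Morrison formula survives for
pseudoinverses: `M' = M - (1 + vᵀ M v)⁻¹ (M v) (M v)ᵀ`. Taking traces, the decrease is
`‖M v‖² / (1 + vᵀ M v)`, which is positive because `M` is positive semidefinite and
`L (M v) = v ≠ 0`. For `L` with kernel spanned by `𝟙`, the vector `v = e_a - e_b` is orthogonal
to the kernel since its coordinates sum to zero.
-/

section RankOneUpdate

variable {m n K : Type*} [Fintype m] [Fintype n] [Field K]
  {L : Matrix m n K} {M : Matrix n m K} {u : m → K} {v : n → K}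

/-- The Sherman–Morrison formula: given an inverse, or only a pseudoinverse, `M` of a matrix `L`,
this is the candidate for the corresponding inverse of `L + u vᵀ`. It takes the junk value `M` when
`1 + vᵀ M u = 0`. -/
def shermanMorrison (M : Matrix n m K) (u : m → K) (v : n → K) : Matrix n m K :=
  M - (1 + v ⬝ᵥ M *ᵥ u)⁻¹ • vecMulVec (M *ᵥ u) (v ᵥ* M)

theorem transpose_shermanMorrison (M : Matrix n m K) (u : m → K) (v : n → K) :
    (shermanMorrison M u v)ᵀ = shermanMorrison Mᵀ v u := by
  have hscalar : u ⬝ᵥ v ᵥ* M = v ⬝ᵥ M *ᵥ u := by rw [dotProduct_comm, ← dotProduct_mulVec]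
  simp only [shermanMorrison, transpose_sub, transpose_smul, transpose_vecMulVec, mulVec_transpose,
    vecMul_transpose, hscalar]

theorem trace_shermanMorrison (M : Matrix n n K) (u v : n → K) :
    (shermanMorrison M u v).trace =
      M.trace - (1 + v ⬝ᵥ M *ᵥ u)⁻¹ * (M *ᵥ u ⬝ᵥ v ᵥ* M) := by
  rw [shermanMorrison, trace_sub, trace_smul, trace_vecMulVec, smul_eq_mul]

theorem add_vecMulVec_mul_shermanMorrison (hu : (L * M) *ᵥ u = u)
    (hne : 1 + v ⬝ᵥ M *ᵥ u ≠ 0) :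
    (L + vecMulVec u v) * shermanMorrison M u v = L * M := by
  rw [shermanMorrison]
  set r := v ⬝ᵥ M *ᵥ u
  set E := vecMulVec u (v ᵥ* M)
  have hL : L * vecMulVec (M *ᵥ u) (v ᵥ* M) = E := by rw [mul_vecMulVec, mulVec_mulVec, hu]
  have hv : vecMulVec u v * vecMulVec (M *ᵥ u) (v ᵥ* M) = r • E := by
    rw [vecMulVec_mul_vecMulVec, vecMulVec_smul]
  calc (L + vecMulVec u v) * (M - (1 + r)⁻¹ • vecMulVec (M *ᵥ u) (v ᵥ* M))
      = L * M + E - (1 + r)⁻¹ • (E + r • E) := by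
        rw [Matrix.mul_sub, Matrix.mul_smul, Matrix.add_mul, Matrix.add_mul, hL, hv, vecMulVec_mul]
    _ = L * M + E - ((1 + r)⁻¹ * (1 + r)) • E := by rw [mul_smul, add_smul, one_smul]
    _ = L * M := by rw [inv_mul_cancel₀ hne, one_smul, add_sub_cancel_right]

theorem shermanMorrison_mul_add_vecMulVec (hv : v ᵥ* (M * L) = v)
    (hne : 1 + v ⬝ᵥ M *ᵥ u ≠ 0) :
    shermanMorrison M u v * (L + vecMulVec u v) = M * L := by
  have hv' : (Lᵀ * Mᵀ) *ᵥ v = v := by rwa [← transpose_mul, mulVec_transpose]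
  have hne' : 1 + u ⬝ᵥ Mᵀ *ᵥ v ≠ 0 := by
    rwa [mulVec_transpose, dotProduct_comm, ← dotProduct_mulVec]
  rw [← transpose_inj, transpose_mul, transpose_add, transpose_vecMulVec,
    transpose_shermanMorrison, add_vecMulVec_mul_shermanMorrison hv' hne', transpose_mul]

end RankOneUpdate

namespace IsMoorePenroseInv

variable {n : ℕ} {L M N : Matrix (Fin n) (Fin n) ℝ} {u v : Fin n → ℝ}

theorem mul_eq_mul_left (hM : IsMoorePenroseInv L M) (hN : IsMoorePenroseInv L N) :
    L * M = L * N := by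
  obtain ⟨hLML, -, hLM_symm, -⟩ := hM
  obtain ⟨hLNL, -, hLN_symm, -⟩ := hN
  calc L * M = (L * N) * (L * M) := by rw [← Matrix.mul_assoc, hLNL]
    _ = ((L * M) * (L * N))ᵀ := by rw [transpose_mul, hLM_symm, hLN_symm]
    _ = (L * N)ᵀ := by rw [← Matrix.mul_assoc, hLML]
    _ = L * N := hLN_symm

protected theorem transpose (hM : IsMoorePenroseInv L M) : IsMoorePenroseInv Lᵀ Mᵀ := by
  obtain ⟨hLML, hMLM, hLM_symm, hML_symm⟩ := hM
  refine ⟨?_, ?_, ?_, ?_⟩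
  · rw [Matrix.mul_assoc, ← transpose_mul, ← transpose_mul, hLML]
  · rw [Matrix.mul_assoc, ← transpose_mul, ← transpose_mul, hMLM]
  · rw [← transpose_mul, hML_symm, hML_symm]
  · rw [← transpose_mul, hLM_symm, hLM_symm]

theorem mul_eq_mul_right (hM : IsMoorePenroseInv L M) (hN : IsMoorePenroseInv L N) :
    M * L = N * L := by
  simpa only [← transpose_mul, transpose_inj] using hM.transpose.mul_eq_mul_left hN.transpose

protected theorem unique (hM : IsMoorePenroseInv L M) (hN : IsMoorePenroseInv L N) : M = N :=
  calc M = M * L * M := hM.2.1.symm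
    _ = N * L * N := by
      rw [Matrix.mul_assoc, hM.mul_eq_mul_left hN, ← Matrix.mul_assoc, hM.mul_eq_mul_right hN]
    _ = N := hN.2.1

protected theorem isSymm (hM : IsMoorePenroseInv L M) (hL : L.IsSymm) : M.IsSymm :=
  IsMoorePenroseInv.unique (hL ▸ hM.transpose) hM

protected theorem posSemidef (hM : IsMoorePenroseInv L M) (hL : L.PosSemidef) :
    M.PosSemidef := by
  have hM_symm : Mᴴ = M := hM.isSymm hL.isHermitian
  have hMLM : (Mᴴ * L * M).PosSemidef := hL.conjTranspose_mul_mul_same M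
  rwa [hM_symm, hM.2.1] at hMLM

theorem mul_mulVec_of_orthogonal_ker_transpose (hM : IsMoorePenroseInv L M)
    (hu : ∀ x, Lᵀ *ᵥ x = 0 → u ⬝ᵥ x = 0) : (L * M) *ᵥ u = u := by
  obtain ⟨hLML, -, hLM_symm, -⟩ := hM
  set residual := u - (L * M) *ᵥ u with hresidual
  have hker : Lᵀ *ᵥ residual = 0 := by
    have habsorb : Lᵀ * (L * M) = Lᵀ := by rw [← hLM_symm, ← transpose_mul, hLML]
    rw [hresidual, mulVec_sub, mulVec_mulVec, habsorb, sub_self]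
  have hnorm : residual ⬝ᵥ residual = 0 :=
    calc residual ⬝ᵥ residual = u ⬝ᵥ residual - (L * M) *ᵥ u ⬝ᵥ residual := sub_dotProduct ..
      _ = u ⬝ᵥ residual - M *ᵥ u ⬝ᵥ Lᵀ *ᵥ residual := by
        rw [← mulVec_mulVec, mulVec_transpose, dotProduct_comm (M *ᵥ u), ← dotProduct_mulVec,
          dotProduct_comm (L *ᵥ _)]
      _ = 0 := by rw [hu residual hker, hker, dotProduct_zero, sub_zero]
  exact (sub_eq_zero.mp (dotProduct_self_eq_zero.mp hnorm)).symm

theorem vecMul_mul_of_orthogonal_ker (hM : IsMoorePenroseInv L M)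
    (hv : ∀ x, L *ᵥ x = 0 → v ⬝ᵥ x = 0) : v ᵥ* (M * L) = v := by
  rw [← mulVec_transpose, transpose_mul]
  exact hM.transpose.mul_mulVec_of_orthogonal_ker_transpose hv

protected theorem shermanMorrison (hM : IsMoorePenroseInv L M) (hu : (L * M) *ᵥ u = u)
    (hv : v ᵥ* (M * L) = v) (hne : 1 + v ⬝ᵥ M *ᵥ u ≠ 0) :
    IsMoorePenroseInv (L + vecMulVec u v) (shermanMorrison M u v) := by
  obtain ⟨hLML, hMLM, hLM_symm, hML_symm⟩ := hM
  have hleft := add_vecMulVec_mul_shermanMorrison hu hne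
  have hright := shermanMorrison_mul_add_vecMulVec hv hne
  refine ⟨?_, ?_, ?_, ?_⟩
  · rw [hleft, Matrix.mul_add, hLML, mul_vecMulVec, hu]
  · rw [hright, shermanMorrison, Matrix.mul_sub, hMLM, Matrix.mul_smul, mul_vecMulVec,
      mulVec_mulVec, hMLM]
  · rw [hleft, hLM_symm]
  · rw [hright, hML_symm]

end IsMoorePenroseInv

theorem trace_strictly_decreases_on_edge_insertion_general {n : ℕ}
    {L M M' : Matrix (Fin n) (Fin n) ℝ} {v : Fin n → ℝ} (hL : L.PosSemidef)
    (hker : ∀ x, L *ᵥ x = 0 → v ⬝ᵥ x = 0) (hv : v ≠ 0) (hM : IsMoorePenroseInv L M)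
    (hM' : IsMoorePenroseInv (L + vecMulVec v v) M') :
    M'.trace < M.trace := by
  have hL_symm : Lᵀ = L := hL.isHermitian
  have hLMv : (L * M) *ᵥ v = v := hM.mul_mulVec_of_orthogonal_ker_transpose (by rwa [hL_symm])
  have hvM : v ᵥ* M = M *ᵥ v := by rw [← mulVec_transpose, hM.isSymm hL_symm]
  have hMv : M *ᵥ v ≠ 0 := fun h => hv (by rw [← hLMv, ← mulVec_mulVec, h, mulVec_zero])
  have hnorm : 0 < M *ᵥ v ⬝ᵥ M *ᵥ v := by simpa using dotProduct_star_self_pos_iff.mpr hMv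
  have hr : 0 ≤ v ⬝ᵥ M *ᵥ v := (hM.posSemidef hL).dotProduct_mulVec_nonneg v
  have hM'_eq : M' = shermanMorrison M v v :=
    hM'.unique (hM.shermanMorrison hLMv (hM.vecMul_mul_of_orthogonal_ker hker) (by positivity))
  rw [hM'_eq, trace_shermanMorrison, hvM]
  exact sub_lt_self _ (by positivity)

theorem trace_strictly_decreases_on_edge_insertion {n : ℕ}
    (L : Matrix (Fin n) (Fin n) ℝ) (hL : L.PosSemidef)
    (hker : ∀ x : Fin n → ℝ,
      L.mulVec x = 0 ↔ ∃ c : ℝ, x = c • (fun _ => (1 : ℝ)))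
    (a b : Fin n) (hab : a ≠ b)
    (M M' : Matrix (Fin n) (Fin n) ℝ)
    (hM : IsMoorePenroseInv L M)
    (hM' : IsMoorePenroseInv
      (L + vecMulVec (Pi.single a 1 - Pi.single b 1)
        (Pi.single a 1 - Pi.single b 1)) M') :
    M'.trace < M.trace := by
  refine trace_strictly_decreases_on_edge_insertion_general hL (fun x hx => ?_) ?_ hM hM'
  · obtain ⟨c, rfl⟩ := (hker x).mp hx
    simp [sub_dotProduct]
  · exact fun h => by simpa [hab] using congrFun h a
end

section
/- Let L be a real symmetric positive semidefinite n×n matrix with an orthonormal eigenbasis u_1, …, u_n of ℝⁿ and corresponding eigenvalues λ_1, …, λ_n (so L·u_i = λ_i·u_i), and let M be the Moore–Penrose pseudoinverse of L. Then for all indices a, b: ‖M·(e_a − e_b)‖² = ∑_{i : λ_i ≠ 0} (u_i[a] − u_i[b])² / λ_i², where ‖·‖ is the Euclidean norm. -/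
open Matrix Finset

/-!
Singular vectors of `L` are singular vectors of its pseudoinverse `M`: if `L v = σ w` and
`Lᵀ w = σ v`, then `Mᵀ v = σ⁻¹ w`, read as `0` when `σ = 0`. Hence the coordinate of `M x` along `v`
is `σ⁻¹ ⟨w, x⟩`, and Parseval's identity in an orthonormal basis of such `v` gives `‖M x‖²`.
An eigenvector of a symmetric matrix is the case `v = w`.
-/

theorem sum_sq_dotProduct_of_orthonormal {ι R : Type*} [Fintype ι] [DecidableEq ι] [CommRing R]
    {u : ι → ι → R} (horth : ∀ i j, u i ⬝ᵥ u j = if i = j then 1 else 0) (x : ι → R) :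
    ∑ i, (u i ⬝ᵥ x) ^ 2 = ∑ j, x j ^ 2 := by
  have hrows : of u * (of u)ᵀ = 1 := by
    ext i j
    exact (horth i j).trans (one_apply ..).symm
  have hcols : (of u)ᵀ * of u = 1 := mul_eq_one_comm.mp hrows
  calc ∑ i, (u i ⬝ᵥ x) ^ 2
      = (of u *ᵥ x) ⬝ᵥ (of u *ᵥ x) := by simp only [sq]; rfl
    _ = x ⬝ᵥ x := by
      rw [dotProduct_mulVec, ← mulVec_transpose, mulVec_mulVec, hcols, one_mulVec]
    _ = ∑ j, x j ^ 2 := by simp only [dotProduct, sq]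

namespace IsMoorePenroseInv

variable {n : ℕ} {L M : Matrix (Fin n) (Fin n) ℝ}

theorem transpose_mul_mul (hM : IsMoorePenroseInv L M) : Lᵀ * (L * M) = Lᵀ := by
  obtain ⟨hLML, -, hLM_symm, -⟩ := hM
  calc Lᵀ * (L * M) = Lᵀ * (L * M)ᵀ := by rw [hLM_symm]
    _ = (L * M * L)ᵀ := (transpose_mul ..).symm
    _ = Lᵀ := by rw [hLML]

theorem transpose_mul_transpose_mul (hM : IsMoorePenroseInv L M) : Lᵀ * (Mᵀ * M) = M := by
  obtain ⟨-, hMLM, -, hML_symm⟩ := hM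
  rw [← Matrix.mul_assoc, ← transpose_mul, hML_symm, hMLM]

theorem vecMul_eq_inv_smul (hM : IsMoorePenroseInv L M) {v w : Fin n → ℝ} {σ : ℝ}
    (hv : L *ᵥ v = σ • w) (hw : w ᵥ* L = σ • v) : v ᵥ* M = σ⁻¹ • w := by
  have hv' : v ᵥ* Lᵀ = σ • w := by rw [vecMul_transpose, hv]
  rcases eq_or_ne σ 0 with rfl | hσ
  · calc v ᵥ* M = v ᵥ* Lᵀ ᵥ* Mᵀ ᵥ* M := by
          rw [vecMul_vecMul, vecMul_vecMul, hM.transpose_mul_transpose_mul]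
      _ = (0 : ℝ)⁻¹ • w := by simp only [hv', zero_smul, zero_vecMul, _root_.inv_zero]
  · have hscaled : σ • σ • (v ᵥ* M) = σ • w := by
      calc σ • σ • (v ᵥ* M) = v ᵥ* Lᵀ ᵥ* L ᵥ* M := by simp only [hv', hw, smul_vecMul]
        _ = σ • w := by rw [vecMul_vecMul, vecMul_vecMul, hM.transpose_mul_mul, hv']
    rw [eq_inv_smul_iff₀ hσ]
    exact smul_right_injective _ hσ hscaled

end IsMoorePenroseInv

theorem spectral_biharmonic_distance_general {n : ℕ} {L M : Matrix (Fin n) (Fin n) ℝ}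
    (hM : IsMoorePenroseInv L M) {v w : Fin n → Fin n → ℝ} {σ : Fin n → ℝ}
    (horth : ∀ i j, v i ⬝ᵥ v j = if i = j then 1 else 0)
    (hv : ∀ i, L *ᵥ v i = σ i • w i) (hw : ∀ i, w i ᵥ* L = σ i • v i) (x : Fin n → ℝ) :
    ∑ j, (M *ᵥ x) j ^ 2 = ∑ i with σ i ≠ 0, (w i ⬝ᵥ x) ^ 2 / σ i ^ 2 := by
  have hcoord (i : Fin n) : v i ⬝ᵥ M *ᵥ x = (w i ⬝ᵥ x) / σ i := by
    rw [dotProduct_mulVec, hM.vecMul_eq_inv_smul (hv i) (hw i), smul_dotProduct, smul_eq_mul,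
      inv_mul_eq_div]
  calc ∑ j, (M *ᵥ x) j ^ 2 = ∑ i, (v i ⬝ᵥ M *ᵥ x) ^ 2 :=
        (sum_sq_dotProduct_of_orthonormal horth _).symm
    _ = ∑ i, (w i ⬝ᵥ x) ^ 2 / σ i ^ 2 := by simp only [hcoord, div_pow]
    _ = ∑ i with σ i ≠ 0, (w i ⬝ᵥ x) ^ 2 / σ i ^ 2 := by
      refine (sum_filter_of_ne (p := (σ · ≠ 0)) fun i _ hterm hσ => hterm ?_).symm
      rw [hσ, zero_pow two_ne_zero, div_zero]

theorem spectral_biharmonic_distance {n : ℕ}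
    (L M : Matrix (Fin n) (Fin n) ℝ) (hL : L.PosSemidef)
    (hM : IsMoorePenroseInv L M)
    (u : Fin n → (Fin n → ℝ)) (lam : Fin n → ℝ)
    (horth : ∀ i j : Fin n, u i ⬝ᵥ u j = if i = j then 1 else 0)
    (heig : ∀ i : Fin n, L.mulVec (u i) = lam i • u i)
    (a b : Fin n) :
    ∑ j : Fin n, (M.mulVec (Pi.single a 1 - Pi.single b 1) j) ^ 2 =
      ∑ i ∈ Finset.univ.filter (fun i : Fin n => lam i ≠ 0),
        (u i a - u i b) ^ 2 / lam i ^ 2 := by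
  have hleft (i : Fin n) : u i ᵥ* L = lam i • u i := by
    rw [← mulVec_transpose, ← conjTranspose_eq_transpose_of_trivial, hL.isHermitian.eq, heig]
  have hdot (i : Fin n) : u i ⬝ᵥ (Pi.single a 1 - Pi.single b 1) = u i a - u i b := by
    rw [dotProduct_sub, dotProduct_single_one, dotProduct_single_one]
  simp only [← hdot]
  exact spectral_biharmonic_distance_general hM horth heig hleft _
end

section
/- Let 2 ≤ c ≤ n, let λ_2 ≤ λ_3 ≤ … ≤ λ_n be positive real numbers, and let x_2, …, x_n be real numbers with ∑_{i=2}^{n} x_i² = 2. Then ∑_{i=2}^{n} x_i²/λ_i ≤ 2/λ_c + ∑_{i=2}^{c} (1/λ_i − 1/λ_c)·x_i². -/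
open Finset

section WeightedSums

variable {ι R : Type*} [Ring R]

theorem sum_mul_eq_mul_sum_add_sum_sub_mul (s : Finset ι) (f w : ι → R) (a : R) :
    ∑ i ∈ s, f i * w i = a * ∑ i ∈ s, w i + ∑ i ∈ s, (f i - a) * w i := by
  simp only [sub_mul, sum_sub_distrib, mul_sum, add_sub_cancel]

theorem sum_mul_le_mul_sum_add_sum_sub_mul [PartialOrder R] [IsOrderedRing R]
    {s t : Finset ι} (hst : s ⊆ t) {f w : ι → R} {a : R}
    (hf : ∀ i ∈ t, i ∉ s → f i ≤ a) (hw : ∀ i ∈ t, i ∉ s → 0 ≤ w i) :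
    ∑ i ∈ t, f i * w i ≤ a * ∑ i ∈ t, w i + ∑ i ∈ s, (f i - a) * w i := by
  have drop_nonpos : ∑ i ∈ t, (f i - a) * w i ≤ ∑ i ∈ s, (f i - a) * w i :=
    sum_le_sum_of_subset_of_nonpos' hst fun i hit his =>
      mul_nonpos_of_nonpos_of_nonneg (sub_nonpos.2 (hf i hit his)) (hw i hit his)
  rw [sum_mul_eq_mul_sum_add_sum_sub_mul t f w a]
  gcongr

end WeightedSums

theorem effective_resistance_upper_bound_general {ι K : Type*}
    [Field K] [LinearOrder K] [IsStrictOrderedRing K]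
    {s t : Finset ι} (hst : s ⊆ t) {c : ι} (hc : c ∈ t) (lam x : ι → K)
    (hpos : ∀ i ∈ t, 0 < lam i) (hle : ∀ i ∈ t, i ∉ s → lam c ≤ lam i) :
    ∑ i ∈ t, x i ^ 2 / lam i ≤
      (∑ i ∈ t, x i ^ 2) / lam c + ∑ i ∈ s, (1 / lam i - 1 / lam c) * x i ^ 2 := by
  have inv_le : ∀ i ∈ t, i ∉ s → 1 / lam i ≤ 1 / lam c := fun i hit his =>
    one_div_le_one_div_of_le (hpos c hc) (hle i hit his)
  simpa only [one_div_mul_eq_div] using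
    sum_mul_le_mul_sum_add_sum_sub_mul hst inv_le fun i _ _ => sq_nonneg (x i)

theorem effective_resistance_upper_bound (n c : ℕ) (hc2 : 2 ≤ c) (hcn : c ≤ n)
    (lam x : ℕ → ℝ)
    (hpos : ∀ i ∈ Finset.Icc 2 n, 0 < lam i)
    (hmono : ∀ i ∈ Finset.Icc 2 n, ∀ j ∈ Finset.Icc 2 n, i ≤ j → lam i ≤ lam j)
    (hx : ∑ i ∈ Finset.Icc 2 n, x i ^ 2 = 2) :
    ∑ i ∈ Finset.Icc 2 n, x i ^ 2 / lam i ≤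
      2 / lam c +
        ∑ i ∈ Finset.Icc 2 c, (1 / lam i - 1 / lam c) * x i ^ 2 := by
  have hc : c ∈ Icc 2 n := mem_Icc.2 ⟨hc2, hcn⟩
  rw [← hx]
  exact effective_resistance_upper_bound_general (Icc_subset_Icc_right hcn) hc lam x hpos
    fun i hi hic => hmono c hc i hi (by grind)
end

section
/- Let 2 ≤ c ≤ n, let λ_2 ≤ λ_3 ≤ … ≤ λ_n be positive real numbers, and let x_2, …, x_n be real numbers with ∑_{i=2}^{n} x_i² = 2. Then the ratio (∑_{i=2}^{n} x_i²/λ_i²) / (1 + ∑_{i=2}^{n} x_i²/λ_i) satisfies the two-sided bound: [2/λ_n² + ∑_{i=2}^{c} (1/λ_i² − 1/λ_n²)·x_i²] / [1 + 2/λ_c + ∑_{i=2}^{c} (1/λ_i − 1/λ_c)·x_i²] ≤ (∑_{i=2}^{n} x_i²/λ_i²) / (1 + ∑_{i=2}^{n} x_i²/λ_i) ≤ [2/λ_c² + ∑_{i=2}^{c} (1/λ_i² − 1/λ_c²)·x_i²] / [1 + 2/λ_n + ∑_{i=2}^{c} (1/λ_i − 1/λ_n)·x_i²]. -/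
open Finset

section Truncation

variable {ι 𝕜 : Type*} [Field 𝕜]

/-- The approximation of `∑ i ∈ s, w i / g i` that keeps the terms indexed by `t ⊆ s` and replaces
every other denominator by the single value `b`. It is written as a correction of the total weight
divided by `b`, so that `g` and the individual weights are evaluated only on `t` once the total
weight is known. -/
def truncatedSum (s t : Finset ι) (w g : ι → 𝕜) (b : 𝕜) : 𝕜 :=
  (∑ i ∈ s, w i) / b + ∑ i ∈ t, (1 / g i - 1 / b) * w i

variable {s t : Finset ι} {w g : ι → 𝕜} {a b : 𝕜}

theorem truncatedSum_eq_sum_add_sum_sdiff [DecidableEq ι] (hts : t ⊆ s) :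
    truncatedSum s t w g b = ∑ i ∈ t, w i / g i + ∑ i ∈ s \ t, w i / b := by
  have hcorrection : ∑ i ∈ t, (1 / g i - 1 / b) * w i =
      ∑ i ∈ t, w i / g i - ∑ i ∈ t, w i / b := by
    rw [← sum_sub_distrib]
    exact sum_congr rfl fun i _ ↦ by ring
  rw [truncatedSum, hcorrection, sum_div, ← sum_sdiff hts]
  ring

variable [LinearOrder 𝕜] [IsStrictOrderedRing 𝕜]

theorem sum_div_le_truncatedSum (hts : t ⊆ s) (hw : ∀ i ∈ s, i ∉ t → 0 ≤ w i) (ha : 0 < a)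
    (hag : ∀ i ∈ s, i ∉ t → a ≤ g i) :
    ∑ i ∈ s, w i / g i ≤ truncatedSum s t w g a := by
  classical
  rw [truncatedSum_eq_sum_add_sum_sdiff hts, ← sum_sdiff hts, add_comm]
  gcongr with i hi
  all_goals obtain ⟨his, hit⟩ := mem_sdiff.mp hi
  · exact hw i his hit
  · exact hag i his hit

theorem truncatedSum_le_sum_div (hts : t ⊆ s) (hw : ∀ i ∈ s, i ∉ t → 0 ≤ w i)
    (hg : ∀ i ∈ s, i ∉ t → 0 < g i) (hgb : ∀ i ∈ s, i ∉ t → g i ≤ b) :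
    truncatedSum s t w g b ≤ ∑ i ∈ s, w i / g i := by
  classical
  rw [truncatedSum_eq_sum_add_sum_sdiff hts, ← sum_sdiff hts, add_comm]
  gcongr with i hi
  all_goals obtain ⟨his, hit⟩ := mem_sdiff.mp hi
  · exact hw i his hit
  · exact hg i his hit
  · exact hgb i his hit

theorem truncatedSum_nonneg (hts : t ⊆ s) (hw : ∀ i ∈ s, 0 ≤ w i) (hg : ∀ i ∈ t, 0 ≤ g i)
    (hb : 0 ≤ b) : 0 ≤ truncatedSum s t w g b := by
  classical
  rw [truncatedSum_eq_sum_add_sum_sdiff hts]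
  exact add_nonneg (sum_nonneg fun i hi ↦ div_nonneg (hw i (hts hi)) (hg i hi))
    (sum_nonneg fun i hi ↦ div_nonneg (hw i (sdiff_subset hi)) hb)

theorem gain_two_sided_bound_general {lam : ι → 𝕜} (hts : t ⊆ s) (hw : ∀ i ∈ s, 0 ≤ w i)
    (hlam : ∀ i ∈ s, 0 < lam i) (ha : 0 < a) (hb : 0 < b)
    (hal : ∀ i ∈ s, i ∉ t → a ≤ lam i) (hlb : ∀ i ∈ s, i ∉ t → lam i ≤ b) :
    truncatedSum s t w (fun i ↦ lam i ^ 2) (b ^ 2) / (1 + truncatedSum s t w lam a) ≤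
      (∑ i ∈ s, w i / lam i ^ 2) / (1 + ∑ i ∈ s, w i / lam i) ∧
    (∑ i ∈ s, w i / lam i ^ 2) / (1 + ∑ i ∈ s, w i / lam i) ≤
      truncatedSum s t w (fun i ↦ lam i ^ 2) (a ^ 2) / (1 + truncatedSum s t w lam b) := by
  have hw_tail : ∀ i ∈ s, i ∉ t → 0 ≤ w i := fun i hi _ ↦ hw i hi
  have hresistance_nonneg : 0 ≤ ∑ i ∈ s, w i / lam i :=
    sum_nonneg fun i hi ↦ div_nonneg (hw i hi) (hlam i hi).le
  have hbiharmonic_nonneg : 0 ≤ ∑ i ∈ s, w i / lam i ^ 2 :=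
    sum_nonneg fun i hi ↦ div_nonneg (hw i hi) (sq_nonneg _)
  have hresistance_le := sum_div_le_truncatedSum hts hw_tail ha hal
  have hle_resistance := truncatedSum_le_sum_div hts hw_tail (fun i hi _ ↦ hlam i hi) hlb
  have hbiharmonic_le :=
    sum_div_le_truncatedSum (g := fun i ↦ lam i ^ 2) hts hw_tail (pow_pos ha 2)
      fun i hi hit ↦ pow_le_pow_left₀ ha.le (hal i hi hit) 2
  have hle_biharmonic :=
    truncatedSum_le_sum_div (g := fun i ↦ lam i ^ 2) hts hw_tail
      (fun i hi _ ↦ pow_pos (hlam i hi) 2)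
      fun i hi hit ↦ pow_le_pow_left₀ (hlam i hi).le (hlb i hi hit) 2
  have htruncated_nonneg := truncatedSum_nonneg hts hw (fun i hi ↦ (hlam i (hts hi)).le) hb.le
  constructor
  · exact div_le_div₀ hbiharmonic_nonneg hle_biharmonic (by linarith) (by linarith)
  · exact div_le_div₀ (hbiharmonic_nonneg.trans hbiharmonic_le) hbiharmonic_le (by linarith)
      (by linarith)

end Truncation

theorem gain_two_sided_bound (n c : ℕ) (hc2 : 2 ≤ c) (hcn : c ≤ n)
    (lam x : ℕ → ℝ)
    (hpos : ∀ i ∈ Finset.Icc 2 n, 0 < lam i)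
    (hmono : ∀ i ∈ Finset.Icc 2 n, ∀ j ∈ Finset.Icc 2 n, i ≤ j → lam i ≤ lam j)
    (hx : ∑ i ∈ Finset.Icc 2 n, x i ^ 2 = 2) :
    (2 / lam n ^ 2 +
        ∑ i ∈ Finset.Icc 2 c, (1 / lam i ^ 2 - 1 / lam n ^ 2) * x i ^ 2) /
      (1 + 2 / lam c +
        ∑ i ∈ Finset.Icc 2 c, (1 / lam i - 1 / lam c) * x i ^ 2) ≤
      (∑ i ∈ Finset.Icc 2 n, x i ^ 2 / lam i ^ 2) /
        (1 + ∑ i ∈ Finset.Icc 2 n, x i ^ 2 / lam i) ∧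
    (∑ i ∈ Finset.Icc 2 n, x i ^ 2 / lam i ^ 2) /
        (1 + ∑ i ∈ Finset.Icc 2 n, x i ^ 2 / lam i) ≤
      (2 / lam c ^ 2 +
        ∑ i ∈ Finset.Icc 2 c, (1 / lam i ^ 2 - 1 / lam c ^ 2) * x i ^ 2) /
      (1 + 2 / lam n +
        ∑ i ∈ Finset.Icc 2 c, (1 / lam i - 1 / lam n) * x i ^ 2) := by
  have hc : c ∈ Icc 2 n := mem_Icc.mpr ⟨hc2, hcn⟩
  have hn : n ∈ Icc 2 n := right_mem_Icc.mpr (hc2.trans hcn)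
  simpa only [truncatedSum, hx, add_assoc] using
    gain_two_sided_bound_general (w := fun i ↦ x i ^ 2) (Icc_subset_Icc_right hcn)
      (fun i _ ↦ sq_nonneg (x i)) hpos (hpos c hc) (hpos n hn)
      (fun i hi hic ↦ hmono c hc i hi (by grind)) fun i hi _ ↦ hmono i hi n hn (mem_Icc.mp hi).2
end
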